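/- Let a, b be real numbers and let u, v : ℝ × ℝ → ℝ be smooth (C^∞) on [0,∞) × [0,1], satisfying the coupled Burgers' equations ∂_t u = ∂_{xx} u − u ∂_x u − a ∂_x(uv) and ∂_t v = ∂_{xx} v − v ∂_x v − b ∂_x(uv) for all t ≥ 0 and x ∈ [0,1], with Dirichlet boundary conditions u(t,0) = u(t,1) = v(t,0) = v(t,1) = 0 for all t ≥ 0. Define J(t) := ½(∫₀¹ (∂_x u(t,x))² dx + ∫₀¹ (∂_x v(t,x))² dx). Then for every t ≥ 0, J'(t) ≤ -J(t) + 40 J(t)² + 36000 (|a|+|b|)⁴ J(t)³. -/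

import Mathlib

section
open Set MeasureTheory intervalIntegral

lemma cb_ii {f : ℝ → ℝ} (hf : ContinuousOn f (Icc 0 1)) : IntervalIntegrable f volume 0 1 := by
  apply ContinuousOn.intervalIntegrable
  rwa [uIcc_of_le zero_le_one]

lemma cb_sup {w w' : ℝ → ℝ} (hw : ∀ x ∈ Icc (0:ℝ) 1, HasDerivWithinAt w (w' x) (Icc 0 1) x)
    (hc : ContinuousOn w' (Icc 0 1)) (h0 : w 0 = 0) {x : ℝ} (hx : x ∈ Icc (0:ℝ) 1) :
    (w x) ^ 2 ≤ ∫ y in (0:ℝ)..1, (w' y) ^ 2 := by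
  have hsub : Icc 0 x ⊆ Icc (0:ℝ) 1 := Icc_subset_Icc_right hx.2
  have hc' : ContinuousOn w' (uIcc 0 x) := by
    rw [uIcc_of_le hx.1]; exact hc.mono hsub
  have hftc : ∫ y in (0:ℝ)..x, w' y = w x - w 0 := by
    apply integral_eq_sub_of_hasDerivAt_of_le hx.1
    · intro y hy
      exact ((hw y (hsub hy)).continuousWithinAt).mono hsub
    · intro y hy
      exact (hw y (hsub (Ioo_subset_Icc_self hy))).hasDerivAt
        (Icc_mem_nhds hy.1 (hy.2.trans_le hx.2))
    · exact hc'.intervalIntegrable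
  have h1 : (0:ℝ) ≤ ∫ y in (0:ℝ)..x, (w' y - w x) ^ 2 :=
    integral_nonneg hx.1 (fun y _ => sq_nonneg _)
  have h2 : ∫ y in (0:ℝ)..x, (w' y - w x) ^ 2
      = (∫ y in (0:ℝ)..x, (w' y) ^ 2) - (2 * w x) * (∫ y in (0:ℝ)..x, w' y) + x * (w x) ^ 2 := by
    rw [← intervalIntegral.integral_const_mul, ← intervalIntegral.integral_sub]
    · have : x * (w x) ^ 2 = ∫ y in (0:ℝ)..x, (w x) ^ 2 := by simp
      rw [this, ← intervalIntegral.integral_add]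
      · congr 1; ext y; ring
      · exact ((hc'.pow 2).sub (hc'.const_mul (2 * w x))).intervalIntegrable
      · simp
    · exact (hc'.pow 2).intervalIntegrable
    · exact (hc'.const_mul (2 * w x)).intervalIntegrable
  have h3 : ∫ y in (0:ℝ)..x, (w' y) ^ 2 ≤ ∫ y in (0:ℝ)..1, (w' y) ^ 2 := by
    apply integral_mono_interval le_rfl hx.1 hx.2
    · exact Filter.Eventually.of_forall (fun y => sq_nonneg _)
    · exact cb_ii (hc.pow 2)
  rw [h2, hftc, h0] at h1
  nlinarith [sq_nonneg (w x), hx.2, mul_nonneg (sub_nonneg.2 hx.2) (sq_nonneg (w x))]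

lemma cb_parts {f f' g g' : ℝ → ℝ}
    (hf : ∀ x ∈ Icc (0:ℝ) 1, HasDerivWithinAt f (f' x) (Icc 0 1) x)
    (hg : ∀ x ∈ Icc (0:ℝ) 1, HasDerivWithinAt g (g' x) (Icc 0 1) x)
    (hf' : ContinuousOn f' (Icc 0 1)) (hg' : ContinuousOn g' (Icc 0 1))
    (h0 : g 0 = 0) (h1 : g 1 = 0) :
    ∫ x in (0:ℝ)..1, f x * g' x = - ∫ x in (0:ℝ)..1, f' x * g x := by
  have := integral_mul_deriv_eq_deriv_mul_of_hasDerivWithinAt (a := 0) (b := 1)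
    (u := f) (v := g) (u' := f') (v' := g') (by rwa [uIcc_of_le zero_le_one])
    (by rwa [uIcc_of_le zero_le_one]) (cb_ii hf') (cb_ii hg')
  rw [this, h0, h1]; ring

lemma cb_poincare {w w' w'' : ℝ → ℝ}
    (hw : ∀ x ∈ Icc (0:ℝ) 1, HasDerivWithinAt w (w' x) (Icc 0 1) x)
    (hw' : ∀ x ∈ Icc (0:ℝ) 1, HasDerivWithinAt w' (w'' x) (Icc 0 1) x)
    (hc : ContinuousOn w'' (Icc 0 1)) (h0 : w 0 = 0) (h1 : w 1 = 0) :
    ∫ y in (0:ℝ)..1, (w' y) ^ 2 ≤ ∫ y in (0:ℝ)..1, (w'' y) ^ 2 := by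
  have c0 : ContinuousOn w (Icc 0 1) := fun x hx => (hw x hx).continuousWithinAt
  have c1 : ContinuousOn w' (Icc 0 1) := fun x hx => (hw' x hx).continuousWithinAt
  have hp := cb_parts hw' hw hc c1 h0 h1
  have e : ∫ y in (0:ℝ)..1, (w' y) ^ 2 = ∫ y in (0:ℝ)..1, w' y * w' y := by
    congr 1; ext y; ring
  have h2 : -∫ y in (0:ℝ)..1, w'' y * w y
      ≤ ∫ y in (0:ℝ)..1, ((1/2) * (w'' y) ^ 2 + (1/2) * ∫ z in (0:ℝ)..1, (w' z) ^ 2) := by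
    rw [← intervalIntegral.integral_neg]
    apply integral_mono_on zero_le_one
    · exact cb_ii (hc.mul c0).neg
    · exact cb_ii (((hc.pow 2).const_mul (1/2)).add continuousOn_const)
    · intro x hx
      have := cb_sup hw c1 h0 hx
      nlinarith [sq_nonneg (w'' x + w x)]
  have i1 : IntervalIntegrable (fun y => (1/2) * (w'' y) ^ 2) volume 0 1 :=
    cb_ii ((hc.pow 2).const_mul (1/2))
  rw [intervalIntegral.integral_add i1 (by simp), intervalIntegral.integral_const_mul] at h2
  simp only [intervalIntegral.integral_const, sub_zero, one_smul] at h2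
  rw [← hp, ← e] at h2
  linarith

lemma cb_half {u ux uxx v vx F : ℝ → ℝ} (a A B : ℝ)
    (cu : ContinuousOn u (Icc 0 1)) (cux : ContinuousOn ux (Icc 0 1))
    (cuxx : ContinuousOn uxx (Icc 0 1)) (cv : ContinuousOn v (Icc 0 1))
    (cvx : ContinuousOn vx (Icc 0 1))
    (hA : ∀ x ∈ Icc (0:ℝ) 1, (u x) ^ 2 ≤ A) (hB : ∀ x ∈ Icc (0:ℝ) 1, (v x) ^ 2 ≤ B)
    (hF : ∀ x ∈ Icc (0:ℝ) 1, F x = uxx x - u x * ux x - a * (ux x * v x + u x * vx x)) :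
    -∫ x in (0:ℝ)..1, uxx x * F x ≤ -(3/4) * (∫ x in (0:ℝ)..1, (uxx x) ^ 2)
      + (2 * A + 4 * a ^ 2 * B) * (∫ x in (0:ℝ)..1, (ux x) ^ 2)
      + (4 * a ^ 2 * A) * (∫ x in (0:ℝ)..1, (vx x) ^ 2) := by
  have cF : ContinuousOn F (Icc 0 1) := by
    refine ContinuousOn.congr ?_ hF
    fun_prop
  have i1 : IntervalIntegrable (fun x => -(3/4) * (uxx x) ^ 2) volume 0 1 := cb_ii ((cuxx.pow 2).const_mul (-(3/4)))
  have i2 : IntervalIntegrable (fun x => (2 * A + 4 * a ^ 2 * B) * (ux x) ^ 2) volume 0 1 :=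
    cb_ii ((cux.pow 2).const_mul (2 * A + 4 * a ^ 2 * B))
  have i3 : IntervalIntegrable (fun x => (4 * a ^ 2 * A) * (vx x) ^ 2) volume 0 1 :=
    cb_ii ((cvx.pow 2).const_mul (4 * a ^ 2 * A))
  rw [← intervalIntegral.integral_neg, ← intervalIntegral.integral_const_mul,
    ← intervalIntegral.integral_const_mul, ← intervalIntegral.integral_const_mul,
    ← intervalIntegral.integral_add i1 i2, ← intervalIntegral.integral_add (i1.add i2) i3]
  apply integral_mono_on zero_le_one
  · exact cb_ii (cuxx.mul cF).neg
  · exact (i1.add i2).add i3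
  · intro x hx
    rw [hF x hx]
    have e1 := hA x hx
    have e2 := hB x hx
    have k1 := mul_le_mul_of_nonneg_right e1 (sq_nonneg (ux x))
    have k2 := mul_le_mul_of_nonneg_right e2 (sq_nonneg (a * ux x))
    have k3 := mul_le_mul_of_nonneg_right e1 (sq_nonneg (a * vx x))
    nlinarith [sq_nonneg (uxx x - 4 * (u x * ux x)),
      sq_nonneg (uxx x - 4 * (a * (ux x * v x + u x * vx x))),
      sq_nonneg (a * (ux x * v x - u x * vx x))]

lemma cb_final (a b A B P Q J : ℝ) (hA : 0 ≤ A) (hB : 0 ≤ B) (hAP : A ≤ P) (hBQ : B ≤ Q)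
    (hJ : J = (1/2) * (A + B)) :
    (-(3/4) * P + (2 * A + 4 * a ^ 2 * B) * A + (4 * a ^ 2 * A) * B)
    + (-(3/4) * Q + (2 * B + 4 * b ^ 2 * A) * B + (4 * b ^ 2 * B) * A)
    ≤ -J + 40 * J ^ 2 + 36000 * (|a| + |b|) ^ 4 * J ^ 3 := by
  have hJ0 : 0 ≤ J := by rw [hJ]; positivity
  have h1 : a ^ 2 + b ^ 2 ≤ (|a| + |b|) ^ 2 := by
    rw [← sq_abs a, ← sq_abs b]
    nlinarith [abs_nonneg a, abs_nonneg b, mul_nonneg (abs_nonneg a) (abs_nonneg b)]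
  set c := |a| + |b|
  have h2 : A * B ≤ J ^ 2 := by rw [hJ]; nlinarith [sq_nonneg (A - B)]
  have h3 : 2 * A ^ 2 + 2 * B ^ 2 ≤ 8 * J ^ 2 := by
    rw [hJ]; nlinarith [mul_nonneg hA hB]
  have h4 : (a ^ 2 + b ^ 2) * (A * B) ≤ c ^ 2 * J ^ 2 :=
    mul_le_mul h1 h2 (mul_nonneg hA hB) (sq_nonneg _)
  have h5 : 8 * (c ^ 2 * J ^ 2) ≤ J / 2 + 32 * (c ^ 4 * J ^ 3) := by
    nlinarith [mul_nonneg hJ0 (sq_nonneg (1 - 8 * (c ^ 2 * J)))]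
  have h6 : 0 ≤ c ^ 4 * J ^ 3 := by positivity
  nlinarith [sq_nonneg J]

/-- The closed half strip. -/
def cbS : Set (ℝ × ℝ) := Ici (0:ℝ) ×ˢ Icc (0:ℝ) 1

noncomputable def cbdx (f : ℝ × ℝ → ℝ) (p : ℝ × ℝ) : ℝ := fderivWithin ℝ f cbS p (0, 1)

noncomputable def cbdt (f : ℝ × ℝ → ℝ) (p : ℝ × ℝ) : ℝ := fderivWithin ℝ f cbS p (1, 0)

lemma cbS_ud : UniqueDiffOn ℝ cbS :=
  (uniqueDiffOn_Ici 0).prod (uniqueDiffOn_Icc zero_lt_one)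

lemma cbS_closure : cbS ⊆ closure (Ioi (0:ℝ) ×ˢ Ioo (0:ℝ) 1) := by
  rw [closure_prod_eq, closure_Ioi, closure_Ioo zero_ne_one]
  exact subset_rfl

lemma cbS_interior : interior cbS = Ioi (0:ℝ) ×ˢ Ioo (0:ℝ) 1 := by
  rw [cbS, interior_prod_eq, interior_Ici, interior_Icc]

lemma cbS_mem {t x : ℝ} (ht : 0 ≤ t) (hx : x ∈ Icc (0:ℝ) 1) : (t, x) ∈ cbS := ⟨ht, hx⟩

lemma cb_smooth_fd {f : ℝ × ℝ → ℝ} (hf : ContDiffOn ℝ (⊤ : ℕ∞) f cbS)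
    : ContDiffOn ℝ (⊤ : ℕ∞) (fderivWithin ℝ f cbS) cbS :=
  hf.fderivWithin cbS_ud (by simp)

lemma cb_smooth_dx {f : ℝ × ℝ → ℝ} (hf : ContDiffOn ℝ (⊤ : ℕ∞) f cbS)
    : ContDiffOn ℝ (⊤ : ℕ∞) (cbdx f) cbS :=
  (cb_smooth_fd hf).clm_apply contDiffOn_const

lemma cb_smooth_dt {f : ℝ × ℝ → ℝ} (hf : ContDiffOn ℝ (⊤ : ℕ∞) f cbS)
    : ContDiffOn ℝ (⊤ : ℕ∞) (cbdt f) cbS :=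
  (cb_smooth_fd hf).clm_apply contDiffOn_const

lemma cb_hasdx {f : ℝ × ℝ → ℝ} (hf : ContDiffOn ℝ (⊤ : ℕ∞) f cbS)
    {t x : ℝ} (ht : 0 ≤ t) (hx : x ∈ Icc (0:ℝ) 1) :
    HasDerivWithinAt (fun y => f (t, y)) (cbdx f (t, x)) (Icc 0 1) x := by
  have h := (hf.differentiableOn (by simp) (t, x) (cbS_mem ht hx)).hasFDerivWithinAt
  have h2 : HasDerivWithinAt (fun y : ℝ => (t, y)) ((0:ℝ), (1:ℝ)) (Icc 0 1) x :=
    (hasDerivWithinAt_const x _ t).prodMk (hasDerivWithinAt_id x _)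
  exact h.comp_hasDerivWithinAt x h2 (fun y hy => cbS_mem ht hy)

lemma cb_hasdt {f : ℝ × ℝ → ℝ} (hf : ContDiffOn ℝ (⊤ : ℕ∞) f cbS)
    {t x : ℝ} (ht : 0 ≤ t) (hx : x ∈ Icc (0:ℝ) 1) :
    HasDerivWithinAt (fun s => f (s, x)) (cbdt f (t, x)) (Ici 0) t := by
  have h := (hf.differentiableOn (by simp) (t, x) (cbS_mem ht hx)).hasFDerivWithinAt
  have h2 : HasDerivWithinAt (fun s : ℝ => (s, x)) ((1:ℝ), (0:ℝ)) (Ici 0) t :=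
    (hasDerivWithinAt_id t _).prodMk (hasDerivWithinAt_const t _ x)
  exact h.comp_hasDerivWithinAt t h2 (fun y hy => cbS_mem hy hx)

lemma cb_symm {f : ℝ × ℝ → ℝ} (hf : ContDiffOn ℝ (⊤ : ℕ∞) f cbS)
    {p : ℝ × ℝ} (hp : p ∈ cbS) : cbdt (cbdx f) p = cbdx (cbdt f) p := by
  have hs : IsSymmSndFDerivWithinAt ℝ f cbS p :=
    (hf p hp).isSymmSndFDerivWithinAt (by
      rw [minSmoothness_of_isRCLikeNormedField]
      exact WithTop.coe_le_coe.2 (le_top : (2 : ℕ∞) ≤ ⊤)) cbS_ud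
      (by rw [cbS_interior]; exact cbS_closure hp) hp
  have hd := (cb_smooth_fd hf).differentiableOn (by simp) p hp
  have key : ∀ v w : ℝ × ℝ, fderivWithin ℝ (fun q => fderivWithin ℝ f cbS q v) cbS p w
      = fderivWithin ℝ (fderivWithin ℝ f cbS) cbS p w v := by
    intro v w
    rw [fderivWithin_clm_apply (cbS_ud p hp) hd (differentiableWithinAt_const v)]
    simp
  have e1 := key (0, 1) (1, 0)
  have e2 := key (1, 0) (0, 1)
  show fderivWithin ℝ (fun q => fderivWithin ℝ f cbS q (0,1)) cbS p (1,0)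
    = fderivWithin ℝ (fun q => fderivWithin ℝ f cbS q (1,0)) cbS p (0,1)
  rw [e1, e2, hs.eq]

lemma cb_slice {f : ℝ × ℝ → ℝ} (hf : ContDiffOn ℝ (⊤ : ℕ∞) f cbS)
    {t : ℝ} (ht : 0 ≤ t) : ContinuousOn (fun x => f (t, x)) (Icc 0 1) :=
  hf.continuousOn.comp (by fun_prop) (fun y hy => cbS_mem ht hy)

lemma cb_deriv_dx {f : ℝ × ℝ → ℝ} (hf : ContDiffOn ℝ (⊤ : ℕ∞) f cbS)
    {t x : ℝ} (ht : 0 ≤ t) (hx : x ∈ Ioo (0:ℝ) 1) :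
    HasDerivAt (fun y => f (t, y)) (cbdx f (t, x)) x :=
  (cb_hasdx hf ht (Ioo_subset_Icc_self hx)).hasDerivAt (Icc_mem_nhds hx.1 hx.2)

lemma cb_deriv_dt {f : ℝ × ℝ → ℝ} (hf : ContDiffOn ℝ (⊤ : ℕ∞) f cbS)
    {t x : ℝ} (ht : 0 < t) (hx : x ∈ Icc (0:ℝ) 1) :
    HasDerivAt (fun s => f (s, x)) (cbdt f (t, x)) t :=
  (cb_hasdt hf ht.le hx).hasDerivAt (Ici_mem_nhds ht)

lemma cb_deriv_dxx {f : ℝ × ℝ → ℝ} (hf : ContDiffOn ℝ (⊤ : ℕ∞) f cbS)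
    {t x : ℝ} (ht : 0 ≤ t) (hx : x ∈ Ioo (0:ℝ) 1) :
    deriv (deriv (fun y => f (t, y))) x = cbdx (cbdx f) (t, x) := by
  have : deriv (fun y => f (t, y)) =ᶠ[nhds x] fun y => cbdx f (t, y) := by
    filter_upwards [isOpen_Ioo.mem_nhds hx] with y hy
    exact (cb_deriv_dx hf ht hy).deriv
  rw [this.deriv_eq]
  exact (cb_deriv_dx (cb_smooth_dx hf) ht hx).deriv

lemma cb_dt_zero {f : ℝ × ℝ → ℝ} (hf : ContDiffOn ℝ (⊤ : ℕ∞) f cbS)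
    {x : ℝ} (hx : x ∈ Icc (0:ℝ) 1) (h0 : ∀ t ≥ (0:ℝ), f (t, x) = 0)
    {t : ℝ} (ht : 0 ≤ t) : cbdt f (t, x) = 0 := by
  have h1 := cb_hasdt hf ht hx
  have h2 : HasDerivWithinAt (fun s => f (s, x)) 0 (Ici 0) t :=
    (hasDerivWithinAt_const t _ (0:ℝ)).congr (fun s hs => h0 s hs) (h0 t ht)
  exact (uniqueDiffOn_Ici 0 t ht).eq_deriv _ h1 h2

lemma cb_int_eq {f : ℝ × ℝ → ℝ} (hf : ContDiffOn ℝ (⊤ : ℕ∞) f cbS)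
    {t : ℝ} (ht : 0 ≤ t) :
    ∫ x in (0:ℝ)..1, (deriv (fun y => f (t, y)) x) ^ 2 = ∫ x in (0:ℝ)..1, (cbdx f (t, x)) ^ 2 := by
  rw [integral_of_le zero_le_one, integral_of_le zero_le_one, integral_Ioc_eq_integral_Ioo,
    integral_Ioc_eq_integral_Ioo]
  apply setIntegral_congr_fun measurableSet_Ioo
  intro x hx
  simp only [(cb_deriv_dx hf ht hx).deriv]

lemma cb_leibniz {f : ℝ × ℝ → ℝ} (hf : ContDiffOn ℝ (⊤ : ℕ∞) f cbS)
    {t : ℝ} (ht : 0 ≤ t) :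
    HasDerivWithinAt (fun s => ∫ x in (0:ℝ)..1, f (s, x)) (∫ x in (0:ℝ)..1, cbdt f (t, x))
      (Ici 0) t := by
  set h : ℝ → ℝ → ℝ := fun s x => cbdt f (max s 0, max 0 (min x 1)) with hh
  have hc : Continuous h.uncurry := by
    have : ContinuousOn (cbdt f) cbS := (cb_smooth_dt hf).continuousOn
    refine this.comp_continuous (f := fun p : ℝ × ℝ => (max p.1 0, max 0 (min p.2 1)))
      (by fun_prop) ?_
    intro p
    exact ⟨mem_Ici.2 (le_max_right _ _), le_max_left _ _, max_le zero_le_one (min_le_right _ _)⟩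
  have hproj : ∀ x ∈ Icc (0:ℝ) 1, max 0 (min x 1) = x := by
    intro x hx
    rw [min_eq_left hx.2, max_eq_right hx.1]
  have hH : Continuous fun s => ∫ x in (0:ℝ)..1, h s x :=
    continuous_parametric_intervalIntegral_of_continuous' hc 0 1
  have hs : ∀ s ≥ (0:ℝ), ∫ x in (0:ℝ)..1, f (s, x)
      = (∫ x in (0:ℝ)..1, f (0, x)) + ∫ r in (0:ℝ)..s, ∫ x in (0:ℝ)..1, h r x := by
    intro s hs
    have hsw : ∫ r in (0:ℝ)..s, ∫ x in (0:ℝ)..1, h r x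
        = ∫ x in (0:ℝ)..1, ∫ r in (0:ℝ)..s, h r x := by
      apply intervalIntegral_intervalIntegral_swap
      refine (hc.continuousOn.integrableOn_compact
        (isCompact_uIcc.prod isCompact_uIcc)).mono_set
        (prod_mono uIoc_subset_uIcc uIoc_subset_uIcc)
    have hftc : ∫ x in (0:ℝ)..1, ∫ r in (0:ℝ)..s, h r x
        = ∫ x in (0:ℝ)..1, (f (s, x) - f (0, x)) := by
      apply intervalIntegral.integral_congr
      intro x hx
      rw [uIcc_of_le zero_le_one] at hx
      simp only
      apply integral_eq_sub_of_hasDerivAt_of_le hs (f := fun r => f (r, x))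
      · intro r hr
        exact ((cb_hasdt hf hr.1 hx).continuousWithinAt).mono (fun z hz => hz.1)
      · intro r hr
        have := cb_deriv_dt hf hr.1 hx
        simpa only [hh, max_eq_left hr.1.le, hproj x hx] using this
      · exact (hc.comp (by fun_prop : Continuous fun r : ℝ => (r, x))).intervalIntegrable _ _
    rw [hsw, hftc, intervalIntegral.integral_sub (cb_ii (cb_slice hf hs))
      (cb_ii (cb_slice hf le_rfl))]
    ring
  have hd : HasDerivAt (fun s => (∫ x in (0:ℝ)..1, f (0, x))
      + ∫ r in (0:ℝ)..s, ∫ x in (0:ℝ)..1, h r x) (∫ x in (0:ℝ)..1, h t x) t :=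
    (integral_hasDerivAt_right (hH.intervalIntegrable _ _)
      (hH.stronglyMeasurableAtFilter _ _) hH.continuousAt).const_add _
  have he : ∫ x in (0:ℝ)..1, h t x = ∫ x in (0:ℝ)..1, cbdt f (t, x) := by
    apply intervalIntegral.integral_congr
    intro x hx
    rw [uIcc_of_le zero_le_one] at hx
    simp only [hh, max_eq_left ht, hproj x hx]
  rw [← he]
  exact hd.hasDerivWithinAt.congr (fun s h => hs s h) (hs t ht)

lemma cb_energy {f : ℝ × ℝ → ℝ} (hf : ContDiffOn ℝ (⊤ : ℕ∞) f cbS)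
    {t : ℝ} (ht : 0 ≤ t) (h0 : ∀ t ≥ (0:ℝ), f (t, 0) = 0)
    (h1 : ∀ t ≥ (0:ℝ), f (t, 1) = 0) :
    HasDerivWithinAt (fun s => ∫ x in (0:ℝ)..1, (cbdx f (s, x)) ^ 2)
      (2 * (-∫ x in (0:ℝ)..1, cbdx (cbdx f) (t, x) * cbdt f (t, x))) (Ici 0) t := by
  have sx := cb_smooth_dx hf
  have st := cb_smooth_dt hf
  have hg : ContDiffOn ℝ (⊤ : ℕ∞) (fun p => (cbdx f p) ^ 2) cbS := sx.pow 2
  have hl := cb_leibniz hg ht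
  convert hl using 1
  rw [← cb_parts (f := fun x => cbdx f (t, x)) (g := fun x => cbdt f (t, x))
    (g' := fun x => cbdx (cbdt f) (t, x)) (fun x hx => cb_hasdx sx ht hx)
    (fun x hx => cb_hasdx st ht hx) (cb_slice (cb_smooth_dx sx) ht)
    (cb_slice (cb_smooth_dx st) ht) (cb_dt_zero hf (by simp) h0 ht)
    (cb_dt_zero hf (by simp) h1 ht), ← intervalIntegral.integral_const_mul]
  apply intervalIntegral.integral_congr
  intro x hx
  rw [uIcc_of_le zero_le_one] at hx
  have k1 := cb_hasdt hg ht hx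
  have k2 := (cb_hasdt sx ht hx).pow 2
  have k3 := (uniqueDiffOn_Ici 0 t ht).eq_deriv _ k1 k2
  simp only
  rw [k3, cb_symm hf (cbS_mem ht hx)]
  simp
  ring

lemma cb_pde {u v : ℝ × ℝ → ℝ} (a : ℝ) (hu : ContDiffOn ℝ (⊤ : ℕ∞) u cbS)
    (hv : ContDiffOn ℝ (⊤ : ℕ∞) v cbS)
    (hequ : ∀ t ≥ (0:ℝ), ∀ x ∈ Set.Icc (0:ℝ) 1,
      deriv (fun s => u (s, x)) t =
        deriv (deriv (fun y => u (t, y))) x - u (t, x) * deriv (fun y => u (t, y)) x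
          - a * deriv (fun y => u (t, y) * v (t, y)) x) :
    EqOn (cbdt u) (fun p => cbdx (cbdx u) p - u p * cbdx u p
      - a * (cbdx u p * v p + u p * cbdx v p)) cbS := by
  have c1 := hu.continuousOn
  have c2 := hv.continuousOn
  have c3 := (cb_smooth_dx hu).continuousOn
  have c4 := (cb_smooth_dx hv).continuousOn
  have c5 := (cb_smooth_dx (cb_smooth_dx hu)).continuousOn
  refine EqOn.of_subset_closure (s := Ioi (0:ℝ) ×ˢ Ioo (0:ℝ) 1) ?_
    (cb_smooth_dt hu).continuousOn (by fun_prop)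
    (prod_mono Ioi_subset_Ici_self Ioo_subset_Icc_self) cbS_closure
  rintro ⟨t, x⟩ ⟨ht, hx⟩
  simp only [mem_Ioi] at ht hx
  have h := hequ t ht.le x (Ioo_subset_Icc_self hx)
  have d1 := cb_deriv_dx hu ht.le hx
  have d2 := cb_deriv_dx hv ht.le hx
  have d3 : deriv (fun y => u (t, y) * v (t, y)) x = _ := (d1.mul d2).deriv
  rw [(cb_deriv_dt hu ht (Ioo_subset_Icc_self hx)).deriv, cb_deriv_dxx hu ht.le hx, d1.deriv,
    d3] at h
  exact h

end

/-- For smooth solutions `u, v` of the coupled Burgers' equations on `[0,∞) × [0,1]`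
with zero Dirichlet boundary conditions, the energy
`J t = ½(‖∂ₓu(t)‖² + ‖∂ₓv(t)‖²)` satisfies
`J'(t) ≤ -J + 40J² + 36000(|a|+|b|)⁴ J³` for all `t ≥ 0`. -/
theorem coupled_burgers_energy_inequality (a b : ℝ) (u v : ℝ × ℝ → ℝ)
    (hu : ContDiffOn ℝ (⊤ : ℕ∞) u (Set.Ici (0:ℝ) ×ˢ Set.Icc (0:ℝ) 1))
    (hv : ContDiffOn ℝ (⊤ : ℕ∞) v (Set.Ici (0:ℝ) ×ˢ Set.Icc (0:ℝ) 1))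
    (hequ : ∀ t ≥ (0:ℝ), ∀ x ∈ Set.Icc (0:ℝ) 1,
      deriv (fun s => u (s, x)) t =
        deriv (deriv (fun y => u (t, y))) x - u (t, x) * deriv (fun y => u (t, y)) x
          - a * deriv (fun y => u (t, y) * v (t, y)) x)
    (heqv : ∀ t ≥ (0:ℝ), ∀ x ∈ Set.Icc (0:ℝ) 1,
      deriv (fun s => v (s, x)) t =
        deriv (deriv (fun y => v (t, y))) x - v (t, x) * deriv (fun y => v (t, y)) x
          - b * deriv (fun y => u (t, y) * v (t, y)) x)
    (hbc : ∀ t ≥ (0:ℝ), u (t, 0) = 0 ∧ u (t, 1) = 0 ∧ v (t, 0) = 0 ∧ v (t, 1) = 0)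
    (J : ℝ → ℝ)
    (hJ : ∀ t, J t = (1/2) * ((∫ x in (0:ℝ)..1, (deriv (fun y => u (t, y)) x) ^ 2)
        + ∫ x in (0:ℝ)..1, (deriv (fun y => v (t, y)) x) ^ 2)) :
    ∃ J' : ℝ → ℝ, (∀ t ≥ (0:ℝ), HasDerivWithinAt J (J' t) (Set.Ici (0:ℝ)) t) ∧
      ∀ t ≥ (0:ℝ), J' t ≤ -J t + 40 * (J t) ^ 2 + 36000 * (|a| + |b|) ^ 4 * (J t) ^ 3 := by
  change ContDiffOn ℝ (⊤ : ℕ∞) u cbS at hu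
  change ContDiffOn ℝ (⊤ : ℕ∞) v cbS at hv
  have pu := cb_pde a hu hv hequ
  have pv := cb_pde b hv hu (by simpa only [mul_comm (v _) (u _)] using heqv)
  have hJ2 : ∀ t ≥ (0:ℝ), J t = (1/2) * ((∫ x in (0:ℝ)..1, (cbdx u (t, x)) ^ 2)
      + ∫ x in (0:ℝ)..1, (cbdx v (t, x)) ^ 2) := by
    intro t ht
    rw [hJ, cb_int_eq hu ht, cb_int_eq hv ht]
  refine ⟨fun t => (-∫ x in (0:ℝ)..1, cbdx (cbdx u) (t, x) * cbdt u (t, x))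
    + (-∫ x in (0:ℝ)..1, cbdx (cbdx v) (t, x) * cbdt v (t, x)), ?_, ?_⟩
  · intro t ht
    have e1 := cb_energy hu ht (fun t ht => (hbc t ht).1) (fun t ht => (hbc t ht).2.1)
    have e2 := cb_energy hv ht (fun t ht => (hbc t ht).2.2.1) (fun t ht => (hbc t ht).2.2.2)
    refine (((e1.add e2).const_mul (1/2)).congr (fun s hs => hJ2 s hs) (hJ2 t ht)).congr_deriv ?_
    ring
  · intro t ht
    obtain ⟨u0, u1, v0, v1⟩ := hbc t ht
    have sux := cb_smooth_dx hu
    have svx := cb_smooth_dx hv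
    have hux := fun x hx => cb_hasdx hu (t := t) (x := x) ht hx
    have hvx := fun x hx => cb_hasdx hv (t := t) (x := x) ht hx
    have huxx := fun x hx => cb_hasdx sux (t := t) (x := x) ht hx
    have hvxx := fun x hx => cb_hasdx svx (t := t) (x := x) ht hx
    have cu := cb_slice hu ht
    have cv := cb_slice hv ht
    have cux := cb_slice sux ht
    have cvx := cb_slice svx ht
    have cuxx := cb_slice (cb_smooth_dx sux) ht
    have cvxx := cb_slice (cb_smooth_dx svx) ht
    have supu := fun x hx => cb_sup hux cux u0 (x := x) hx
    have supv := fun x hx => cb_sup hvx cvx v0 (x := x) hx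
    have k1 := cb_half a _ _ cu cux cuxx cv cvx supu supv
      (F := fun x => cbdt u (t, x)) (fun x hx => pu (cbS_mem ht hx))
    have k2 := cb_half b _ _ cv cvx cvxx cu cux supv supu
      (F := fun x => cbdt v (t, x)) (fun x hx => pv (cbS_mem ht hx))
    have hA : (0:ℝ) ≤ ∫ x in (0:ℝ)..1, (cbdx u (t, x)) ^ 2 :=
      intervalIntegral.integral_nonneg zero_le_one (fun _ _ => sq_nonneg _)
    have hB : (0:ℝ) ≤ ∫ x in (0:ℝ)..1, (cbdx v (t, x)) ^ 2 :=
      intervalIntegral.integral_nonneg zero_le_one (fun _ _ => sq_nonneg _)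
    exact (add_le_add k1 k2).trans (cb_final a b _ _ _ _ _ hA hB
      (cb_poincare hux huxx cuxx u0 u1) (cb_poincare hvx hvxx cvxx v0 v1) (hJ2 t ht))
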